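/- arXiv:math/9909183 — 4 statements merged into one kernel-verified Lean document; each statement's English description precedes it below -/
import Mathlib

section
/- The Heisenberg operators act irreducibly on S: if U ⊆ S is a ℂ-linear subspace with h(n)(U) ⊆ U for every n ∈ ℤ and U ≠ {0}, then U = S. -/
/-!
Differentiation lowers the total degree of a nonconstant polynomial, and in characteristic zero a
polynomial of positive degree has a nonzero partial derivative. Hence, starting from any nonzero
element of `U` and applying the operators `h(n)`, `n > 0`, one reaches a nonzero constant, so
`1 ∈ U` (`one_mem_of_pderiv_mem`). Multiplying `1` by the variables, i.e. applying the `h(n)` with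
`n < 0`, produces all monomials, so `U` is everything.
-/

noncomputable section

/-- The polynomial algebra `S = ℂ[a₁,a₂,a₃,…]`, with variables indexed by `ℕ+`. -/
abbrev SS : Type := MvPolynomial ℕ+ ℂ

/-- The Heisenberg operators `h(n)` on `S`: for `n < 0`, multiplication by `a₋ₙ`;
for `n > 0`, `n·∂/∂aₙ`; and `h(0) = 0`. -/
noncomputable def hOp (n : ℤ) : Module.End ℂ SS :=
  if _h1 : 0 < n then
    (n : ℂ) • (MvPolynomial.pderiv (R := ℂ) (⟨n.toNat, by omega⟩ : ℕ+)).toLinearMap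
  else if _h2 : n < 0 then
    LinearMap.mulLeft ℂ (MvPolynomial.X (⟨(-n).toNat, by omega⟩ : ℕ+))
  else 0

/-- The normally ordered product `:h(i)h(j):`  (equal to `h(i)∘h(j)` if `i ≤ j`,
and to `h(j)∘h(i)` if `i > j`; note `f * g` is composition in `Module.End`). -/
noncomputable def nord (i j : ℤ) : Module.End ℂ SS :=
  if i ≤ j then hOp i * hOp j else hOp j * hOp i

/-- A space stable under all partial derivatives and containing a nonzero polynomial contains `1`.
The induction is on an upper bound `N` for the total degree. -/
theorem one_mem_of_pderiv_mem (U : Submodule ℂ SS)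
    (hU : ∀ i : ℕ+, ∀ p ∈ U, MvPolynomial.pderiv i p ∈ U) (N : ℕ) :
    ∀ p ∈ U, p ≠ 0 → p.totalDegree ≤ N → (1 : SS) ∈ U := by
  induction N with
  | zero =>
    intro p hp h0 hd
    have hC := MvPolynomial.totalDegree_eq_zero_iff_eq_C.mp (Nat.le_zero.mp hd)
    have hc : p.coeff 0 ≠ 0 := by
      intro h
      rw [h, map_zero] at hC
      exact h0 hC
    have h1 : (1 : SS) = (p.coeff 0)⁻¹ • p := by
      conv_rhs => rw [hC]
      rw [MvPolynomial.smul_eq_C_mul, ← map_mul]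
      simp [hc]
    rw [h1]
    exact U.smul_mem _ hp
  | succ N ih =>
    intro p hp h0 hd
    by_cases hv : ∃ m ∈ p.support, m ≠ 0
    · obtain ⟨m, hm, hm0⟩ := hv
      obtain ⟨i, hi⟩ := Finsupp.ne_iff.mp hm0
      refine ih (MvPolynomial.pderiv i p) (hU i p hp) ?_ ?_
      · -- the monomial `m` survives in `∂p/∂aᵢ` as `m - eᵢ`, with coefficient multiplied by `m i`
        intro h
        have hc := congrArg (MvPolynomial.coeff (m - Finsupp.single i 1)) h
        have hle : Finsupp.single i 1 ≤ m := by
          rw [Finsupp.single_le_iff]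
          exact Nat.one_le_iff_ne_zero.mpr hi
        rw [MvPolynomial.coeff_pderiv, tsub_add_cancel_of_le hle, MvPolynomial.coeff_zero] at hc
        rcases mul_eq_zero.mp hc with h' | h'
        · exact MvPolynomial.mem_support_iff.mp hm h'
        · exact Nat.cast_add_one_ne_zero _ h'
      · refine Finset.sup_le fun k hk => ?_
        rw [MvPolynomial.mem_support_iff, MvPolynomial.coeff_pderiv] at hk
        have hk' := MvPolynomial.le_totalDegree
          (MvPolynomial.mem_support_iff.mpr (left_ne_zero_of_mul hk))
        change (k + Finsupp.single i 1).degree ≤ _ at hk'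
        rw [map_add, Finsupp.degree_single] at hk'
        change k.degree ≤ N
        omega
    · push Not at hv
      refine ih p hp h0 (Finset.sup_le fun k hk => ?_)
      simp [hv k hk]

/-- The Heisenberg operators act irreducibly on `S`: any nonzero subspace invariant
under all `h(n)` is all of `S`. -/
theorem heisenberg_irreducible (U : Submodule ℂ SS)
    (hU : ∀ n : ℤ, ∀ p ∈ U, hOp n p ∈ U) (hne : U ≠ ⊥) : U = ⊤ := by
  have hD : ∀ i : ℕ+, ∀ p ∈ U, MvPolynomial.pderiv i p ∈ U := by
    intro i p hp
    have hpos : (0 : ℤ) < (i : ℕ) := by exact_mod_cast i.pos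
    have h := hU (i : ℕ) p hp
    have e : hOp (i : ℕ) = (((i : ℕ) : ℤ) : ℂ) • (MvPolynomial.pderiv (R := ℂ) i).toLinearMap :=
      dif_pos hpos
    rw [e] at h
    have hi : ((((i : ℕ) : ℤ) : ℂ)) ≠ 0 := by exact_mod_cast i.ne_zero
    exact (U.smul_mem_iff hi).mp h
  have hX : ∀ i : ℕ+, ∀ p ∈ U, MvPolynomial.X i * p ∈ U := by
    -- for `n = -(k + 1)` the index `-n` of the variable in `hOp n` reduces to `k + 1`
    rintro ⟨_ | k, hk⟩ p hp
    · exact absurd hk (lt_irrefl 0)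
    have h := hU (Int.negSucc k) p hp
    have e : hOp (Int.negSucc k) =
        LinearMap.mulLeft ℂ (MvPolynomial.X (⟨k + 1, hk⟩ : ℕ+) : SS) :=
      (dif_neg (by omega)).trans (dif_pos (by omega))
    rw [e] at h
    exact h
  obtain ⟨p, hp, h0⟩ := U.ne_bot_iff.mp hne
  have h1 := one_mem_of_pderiv_mem U hD _ p hp h0 le_rfl
  rw [eq_top_iff]
  rintro q -
  induction q using MvPolynomial.induction_on with
  | C a =>
    have := U.smul_mem a h1
    rwa [MvPolynomial.smul_eq_C_mul, mul_one] at this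
  | add p q hp hq => exact U.add_mem hp hq
  | mul_X p i hp =>
    rw [mul_comm]
    exact hX i p hp
end
end

section
/- The operators L(n) on S satisfy the Virasoro relations with central charge 1: for all m, n ∈ ℤ, [L(m), L(n)] = (m−n)·L(m+n) + (1/12)·(m³−m)·δ_{m+n,0}·id_S. -/
/-!
The operators `h(k)` satisfy the Heisenberg relations `[h(i), h(j)] = i δ_{i+j,0}` (`hOp_comm`).
Reordering changes a product `h(i)h(j)` only by a scalar, so `[:h(i)h(j):, h(k)]` can be computed
by the Leibniz rule, and summing over `i + j = m` gives `[L(m), h(k)] = -k h(m+k)` (`L_hOp_comm`).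

By the Jacobi identity, `D = [L(m), L(n)] - (m-n) L(m+n)` commutes with every `h(k)`. Commuting
with the multiplications `h(-k)` makes `D` multiplication by `D(1)`; commuting with the
derivations `h(k)` makes `D(1)` a constant (`scalar_of_comm`). Hence `D` is a scalar, namely the
constant coefficient of `D(1)`.

That scalar is a vacuum expectation. Constant coefficients of `L(n)p` vanish for `n ≤ 0` and
`L(n)1 = 0` for `n ≥ 0`, so only `L(m)L(n)1` with `n < 0` contributes. Moving `L(m)` through the
two creation operators in each summand of `L(n)1` gives, for `n = -m`,
`(1/2) ∑_{0 ≤ k < m} k(m-k) = (m³-m)/12` (`vac_L_L_one`).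
-/

noncomputable section

open MvPolynomial

/-! ### The Heisenberg relations -/

lemma hOp_pos (k : ℕ+) (p : SS) : hOp (k : ℤ) p = (k : ℂ) • pderiv k p := by
  have h : (0 : ℤ) < k := by exact_mod_cast k.pos
  have e : (⟨((k : ℕ) : ℤ).toNat, by omega⟩ : ℕ+) = k := by
    apply PNat.coe_injective
    simp
  have h2 : hOp (k : ℤ) = (((k : ℤ) : ℂ)) •
      (pderiv (R := ℂ) (⟨((k : ℕ) : ℤ).toNat, by omega⟩ : ℕ+)).toLinearMap := dif_pos h
  rw [h2, e, Int.cast_natCast]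
  rfl

lemma hOp_neg (k : ℕ+) (p : SS) : hOp (-(k : ℤ)) p = X k * p := by
  have h : (0 : ℤ) < k := by exact_mod_cast k.pos
  have e : (⟨(- -((k : ℕ) : ℤ)).toNat, by omega⟩ : ℕ+) = k := by
    apply PNat.coe_injective
    simp
  have h2 : hOp (-(k : ℤ)) = LinearMap.mulLeft ℂ
      (X (⟨(- -((k : ℕ) : ℤ)).toNat, by omega⟩ : ℕ+) : SS) :=
    (dif_neg (by omega)).trans (dif_pos (by omega))
  rw [h2, e]
  rfl

lemma hOp_zero : hOp 0 = 0 := by simp [hOp]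

lemma int_cases_pnat (n : ℤ) : n = 0 ∨ (∃ k : ℕ+, n = k) ∨ ∃ k : ℕ+, n = -(k : ℤ) := by
  rcases lt_trichotomy n 0 with h | h | h
  · exact .inr (.inr ⟨⟨(-n).toNat, by omega⟩, by simp; omega⟩)
  · exact .inl h
  · exact .inr (.inl ⟨⟨n.toNat, by omega⟩, by simp; omega⟩)

lemma pderiv_comm_pderiv (a b : ℕ+) (p : SS) :
    pderiv a (pderiv b p) = pderiv b (pderiv a p) := by
  have h : ⁅(pderiv a : Derivation ℂ SS SS), (pderiv b : Derivation ℂ SS SS)⁆ = 0 := by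
    apply derivation_ext
    intro k
    simp only [Derivation.commutator_apply, pderiv_X (R := ℂ), Pi.single_apply, Derivation.zero_apply]
    split_ifs <;> simp
  have := DFunLike.congr_fun h p
  rwa [Derivation.commutator_apply, Derivation.zero_apply, sub_eq_zero] at this

/-- The Heisenberg relations `[h(i), h(j)] = i δ_{i+j,0}`. -/
lemma hOp_comm (i j : ℤ) (p : SS) :
    hOp i (hOp j p) - hOp j (hOp i p) = if i + j = 0 then (i : ℂ) • p else 0 := by
  rcases int_cases_pnat i with rfl | ⟨a, rfl⟩ | ⟨a, rfl⟩
  · simp [hOp_zero]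
  all_goals rcases int_cases_pnat j with rfl | ⟨b, rfl⟩ | ⟨b, rfl⟩
  · simp [hOp_zero]
  · have : ¬ ((a : ℤ) + b = 0) := by have := a.pos; have := b.pos; omega
    rw [if_neg this]
    simp only [hOp_pos, map_smul]
    rw [pderiv_comm_pderiv, smul_comm, sub_self]
  · simp only [hOp_pos, hOp_neg, pderiv_mul]
    by_cases h : a = b
    · subst h
      simp [smul_add]
    · have : ¬ ((a : ℤ) + -b = 0) := by
        intro h'; apply h; apply PNat.coe_injective; omega
      rw [if_neg this]
      simp [pderiv_X_of_ne (Ne.symm h)]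
  · simp [hOp_zero]
  · simp only [hOp_pos, hOp_neg, pderiv_mul]
    by_cases h : a = b
    · subst h
      simp [smul_add]
    · have : ¬ (-(a : ℤ) + b = 0) := by
        intro h'; apply h; apply PNat.coe_injective; omega
      rw [if_neg this]
      simp [pderiv_X_of_ne h]
  · have : ¬ (-(a : ℤ) + -b = 0) := by have := a.pos; have := b.pos; omega
    rw [if_neg this]
    simp only [hOp_neg]
    ring

/-! ### Commutators of `L(m)` with the Heisenberg operators -/

/-- Only finitely many variables occur in `p`, so `h(k)` kills `p` for large `k`. -/
lemma hOp_eventually (p : SS) : ∃ N : ℤ, ∀ k, N < k → hOp k p = 0 := by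
  obtain ⟨M, hM⟩ := p.vars.bddAbove
  refine ⟨M, fun k hk => ?_⟩
  have : (0 : ℤ) < M := by exact_mod_cast M.pos
  rcases int_cases_pnat k with rfl | ⟨a, rfl⟩ | ⟨a, rfl⟩
  · simp [hOp_zero]
  · rw [hOp_pos, pderiv_eq_zero_of_notMem_vars, smul_zero]
    intro h
    have : (a : ℕ) ≤ M := by exact_mod_cast hM h
    omega
  · have := a.pos
    omega

/-- The sum defining `L(n)p` has finite support, so the `finsum` takes no junk value. -/
lemma nord_finite (n : ℤ) (p : SS) : (fun j => nord j (n - j) p).HasFiniteSupport := by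
  obtain ⟨N, hN⟩ := hOp_eventually p
  refine (Set.finite_Icc (n - N) N).subset fun j hj => ?_
  by_contra h
  apply hj
  simp only [nord]
  split_ifs with h1
  · have : N < n - j := by rw [Set.mem_Icc] at h; omega
    simp [hN _ this]
  · have : N < j := by rw [Set.mem_Icc] at h; omega
    simp [hN _ this]

lemma nord_comm (i j k : ℤ) (p : SS) :
    nord i j (hOp k p) - hOp k (nord i j p)
      = (if i + k = 0 then (i : ℂ) • hOp j p else 0)
        + (if j + k = 0 then (j : ℂ) • hOp i p else 0) := by
  have key : ∀ i j : ℤ, hOp i (hOp j (hOp k p)) - hOp k (hOp i (hOp j p))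
      = (if i + k = 0 then (i : ℂ) • hOp j p else 0)
        + (if j + k = 0 then (j : ℂ) • hOp i p else 0) := by
    intro i j
    rw [← hOp_comm i k (hOp j p)]
    have := congrArg (hOp i) (hOp_comm j k p)
    rw [apply_ite (hOp i), map_smul, map_zero, map_sub] at this
    rw [← this]
    abel
  by_cases h : i ≤ j
  · rw [nord, if_pos h]
    exact key i j
  · rw [nord, if_neg h, add_comm]
    exact key j i

/-- `[L(m), h(k)] = -k h(m+k)`: the summands `j = -k` and `j = m + k` contribute equally, which
cancels the factor `1/2`. -/
lemma L_hOp_comm (L : ℤ → Module.End ℂ SS)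
    (hL : ∀ (n : ℤ) (p : SS), L n p = (1 / 2 : ℂ) • ∑ᶠ j : ℤ, nord j (n - j) p)
    (m k : ℤ) (p : SS) :
    L m (hOp k p) - hOp k (L m p) = -(k : ℂ) • hOp (m + k) p := by
  have hf : (fun j => hOp k (nord j (m - j) p)).HasFiniteSupport :=
    (nord_finite m p).subset fun j hj hz => hj (by simp only at hz ⊢; rw [hz, map_zero])
  rw [hL, hL, map_smul, ← smul_sub, map_finsum (hOp k) (nord_finite m p),
    ← finsum_sub_distrib (nord_finite m _) hf]
  simp_rw [nord_comm]
  have h1 : ∀ j : ℤ, j ≠ -k → (if j + k = 0 then (j : ℂ) • hOp (m - j) p else 0) = 0 :=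
    fun j hj => if_neg (by omega)
  have h2 : ∀ j : ℤ, j ≠ m + k →
      (if m - j + k = 0 then ((m - j : ℤ) : ℂ) • hOp j p else 0) = 0 :=
    fun j hj => if_neg (by omega)
  rw [finsum_add_distrib, finsum_eq_single _ _ h1, finsum_eq_single _ _ h2,
    if_pos (by omega), if_pos (by omega)]
  · rw [show m - -k = m + k by ring, show m - (m + k) = -k by ring, ← add_smul, smul_smul]
    push_cast
    congr 1
    ring
  · exact (Set.finite_singleton (-k)).subset fun j hj => by
      by_contra hne
      exact hj (h1 j hne)
  · exact (Set.finite_singleton (m + k)).subset fun j hj => by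
      by_contra hne
      exact hj (h2 j hne)

/-! ### Operators commuting with all `h(k)` -/

lemma eq_C_of_pderiv (p : SS) (h : ∀ k, pderiv k p = 0) : p = C (constantCoeff p) := by
  ext d
  rw [coeff_C]
  split_ifs with hd
  · subst hd; rfl
  · obtain ⟨k, hk⟩ : ∃ k, d k ≠ 0 := by
      by_contra! hc
      exact hd (Finsupp.ext fun k => (hc k).symm)
    have hz := congrArg (coeff (d - Finsupp.single k 1)) (h k)
    rw [coeff_pderiv, coeff_zero,
      tsub_add_cancel_of_le (by simpa using Nat.one_le_iff_ne_zero.2 hk)] at hz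
    exact (mul_eq_zero.1 hz).resolve_right (Nat.cast_add_one_ne_zero _)

/-- A Schur-type lemma: an operator commuting with all `h(k)` is the scalar given by the constant
coefficient of its value at the vacuum `1`. -/
lemma scalar_of_comm (D : Module.End ℂ SS) (h : ∀ k p, D (hOp k p) = hOp k (D p)) :
    D = constantCoeff (D 1) • (1 : Module.End ℂ SS) := by
  have h1 : D 1 = C (constantCoeff (D 1)) := by
    apply eq_C_of_pderiv
    intro k
    have := h k 1
    rw [hOp_pos, hOp_pos, pderiv_one, smul_zero, map_zero] at this
    exact (smul_eq_zero.1 this.symm).resolve_left (by exact_mod_cast k.ne_zero)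
  have h2 : ∀ p, D p = p * D 1 := by
    intro p
    induction p using MvPolynomial.induction_on with
    | C a =>
      have : (C a : SS) = a • 1 := by rw [smul_eq_C_mul, mul_one]
      rw [this, map_smul, smul_mul_assoc, one_mul]
    | add p q hp hq => rw [map_add, hp, hq, add_mul]
    | mul_X p k hp => rw [mul_comm p, ← hOp_neg, h, hp, hOp_neg, hOp_neg, mul_assoc]
  refine LinearMap.ext fun p => ?_
  rw [h2, h1, constantCoeff_C, LinearMap.smul_apply, Module.End.one_apply, smul_eq_C_mul, mul_comm]

/-! ### Vacuum expectations -/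

lemma vac_smul (c : ℂ) (p : SS) : constantCoeff (c • p) = c * constantCoeff p := by
  rw [smul_eq_C_mul, map_mul, constantCoeff_C]

lemma vac_hOp {k : ℤ} (hk : k ≤ 0) (p : SS) : constantCoeff (hOp k p) = 0 := by
  rcases int_cases_pnat k with rfl | ⟨a, rfl⟩ | ⟨a, rfl⟩
  · simp [hOp_zero]
  · have := a.pos
    omega
  · rw [hOp_neg, map_mul, constantCoeff_X, zero_mul]

lemma hOp_one {k : ℤ} (hk : 0 ≤ k) : hOp k 1 = 0 := by
  rcases int_cases_pnat k with rfl | ⟨a, rfl⟩ | ⟨a, rfl⟩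
  · simp [hOp_zero]
  · rw [hOp_pos, pderiv_one, smul_zero]
  · have := a.pos
    omega

lemma nord_one {i j : ℤ} (h : 0 ≤ i ∨ 0 ≤ j) : nord i j 1 = 0 := by
  rw [nord]
  split_ifs with hij
  · rw [Module.End.mul_apply, hOp_one (by omega), map_zero]
  · rw [Module.End.mul_apply, hOp_one (by omega), map_zero]

lemma vac_nord {i j : ℤ} (h : i ≤ 0 ∨ j ≤ 0) (p : SS) : constantCoeff (nord i j p) = 0 := by
  rw [nord]
  split_ifs with hij
  · exact vac_hOp (by omega) _
  · exact vac_hOp (by omega) _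

lemma vac_hOp_hOp_one {a b : ℤ} (hb : b < 0) :
    constantCoeff (hOp a (hOp b 1)) = if a + b = 0 then (a : ℂ) else 0 := by
  rcases le_or_gt a 0 with ha | ha
  · rw [vac_hOp ha, if_neg (by omega)]
  · have := hOp_comm a b 1
    rw [hOp_one ha.le, map_zero, sub_zero] at this
    rw [this]
    split_ifs
    · rw [vac_smul, map_one, mul_one]
    · exact map_zero _

lemma sum_range_mul_sub (M : ℂ) (N : ℕ) :
    ∑ k ∈ Finset.range N, (k : ℂ) * (M - k)
      = M * (N * (N - 1)) / 2 - (N - 1) * N * (2 * N - 1) / 6 := by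
  induction N with
  | zero => simp
  | succ N ih =>
    rw [Finset.sum_range_succ, ih]
    push_cast
    ring

lemma L_one (L : ℤ → Module.End ℂ SS)
    (hL : ∀ (n : ℤ) (p : SS), L n p = (1 / 2 : ℂ) • ∑ᶠ j : ℤ, nord j (n - j) p)
    {n : ℤ} (hn : 0 ≤ n) : L n 1 = 0 := by
  have : ∀ j : ℤ, nord j (n - j) 1 = 0 := fun j => nord_one (by omega)
  rw [hL]
  simp [this]

lemma vac_L (L : ℤ → Module.End ℂ SS)
    (hL : ∀ (n : ℤ) (p : SS), L n p = (1 / 2 : ℂ) • ∑ᶠ j : ℤ, nord j (n - j) p)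
    {n : ℤ} (hn : n ≤ 0) (p : SS) : constantCoeff (L n p) = 0 := by
  have : ∀ j : ℤ, constantCoeff (nord j (n - j) p) = 0 := fun j => vac_nord (by omega) p
  rw [hL, vac_smul, map_finsum constantCoeff (nord_finite n p)]
  simp [this]

lemma vac_L_nord_one (L : ℤ → Module.End ℂ SS)
    (hL : ∀ (n : ℤ) (p : SS), L n p = (1 / 2 : ℂ) • ∑ᶠ j : ℤ, nord j (n - j) p)
    (m : ℤ) {i j : ℤ} (hi : i < 0) (hj : j < 0) :
    constantCoeff (L m (nord i j 1)) = if m + i + j = 0 then -(i : ℂ) * (m + i) else 0 := by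
  have h1 : nord i j 1 = hOp i (hOp j 1) := by
    rw [nord]
    split_ifs
    · rfl
    · have := hOp_comm i j 1
      rw [if_neg (by omega), sub_eq_zero] at this
      exact this.symm
  rw [h1, eq_add_of_sub_eq (L_hOp_comm L hL m i (hOp j 1)), map_add, vac_hOp hi.le, add_zero,
    vac_smul, vac_hOp_hOp_one hj]
  split_ifs
  · push_cast
    ring
  · exact mul_zero _

/-- The two-point function of the `L(n)`, which produces the central term. -/
lemma vac_L_L_one (L : ℤ → Module.End ℂ SS)
    (hL : ∀ (n : ℤ) (p : SS), L n p = (1 / 2 : ℂ) • ∑ᶠ j : ℤ, nord j (n - j) p)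
    (m n : ℤ) :
    constantCoeff (L m (L n 1))
      = if m + n = 0 ∧ n < 0 then (1 / 12 : ℂ) * ((m : ℂ) ^ 3 - m) else 0 := by
  rcases le_or_gt 0 n with hn | hn
  · rw [L_one L hL hn, map_zero, map_zero, if_neg (by omega)]
  have hT : ∀ j : ℤ, constantCoeff (L m (nord j (n - j) 1))
      = if m + n = 0 ∧ n < j ∧ j < 0 then -(j : ℂ) * (m + j) else 0 := by
    intro j
    by_cases hj : n < j ∧ j < 0
    · rw [vac_L_nord_one L hL m hj.2 (by omega)]
      exact if_congr (by constructor <;> intro h <;> omega) rfl rfl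
    · rw [nord_one (by omega), map_zero, map_zero, if_neg (fun h => hj h.2)]
  have hf : (fun j => L m (nord j (n - j) 1)).HasFiniteSupport :=
    (nord_finite n 1).subset fun j hj hz => hj (by simp only at hz ⊢; rw [hz, map_zero])
  rw [hL n, map_smul, vac_smul, map_finsum (L m) (nord_finite n 1), map_finsum constantCoeff hf]
  simp_rw [hT]
  by_cases hmn : m + n = 0
  · obtain ⟨N, rfl⟩ : ∃ N : ℕ, n = -(N : ℤ) := ⟨(-n).toNat, by omega⟩
    obtain rfl : m = N := by omega
    rw [if_pos ⟨hmn, hn⟩,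
      finsum_eq_sum_of_support_subset (s := (Finset.range N).image fun k : ℕ => -(k : ℤ)),
      Finset.sum_image (fun a _ b _ h => by simpa using h),
      Finset.sum_congr rfl (g := fun k : ℕ => (k : ℂ) * ((N : ℂ) - k)), sum_range_mul_sub]
    · push_cast
      ring
    · intro k hk
      rw [Finset.mem_range] at hk
      split_ifs with h
      · push_cast
        ring
      · -- Only the endpoint `k = 0` is excluded from the support, and the summand vanishes there.
        obtain rfl : k = 0 := by omega
        simp
    · intro j hj
      rw [Function.mem_support] at hj
      have h := (ite_ne_right_iff.1 hj).1
      simp only [Finset.coe_image, Finset.coe_range, Set.mem_image, Set.mem_Iio]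
      exact ⟨(-j).toNat, by omega, by omega⟩
  · simp [hmn]

/-- The Virasoro relations with central charge 1:  if `L n` acts pointwise as
`p ↦ (1/2)∑_{j∈ℤ} (:h(j)h(n−j):)(p)`, then
`[L(m), L(n)] = (m−n)L(m+n) + (1/12)(m³−m)δ_{m+n,0}·id_S`. -/
theorem virasoro_relations (L : ℤ → Module.End ℂ SS)
    (hL : ∀ (n : ℤ) (p : SS), L n p = (1 / 2 : ℂ) • ∑ᶠ j : ℤ, nord j (n - j) p)
    (m n : ℤ) :
    L m * L n - L n * L m
      = ((m : ℂ) - (n : ℂ)) • L (m + n)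
        + (if m + n = 0 then (1 / 12 : ℂ) * ((m : ℂ) ^ 3 - (m : ℂ)) else 0) •
            (1 : Module.End ℂ SS) := by
  set D : Module.End ℂ SS := L m * L n - L n * L m - ((m : ℂ) - (n : ℂ)) • L (m + n) with hD
  have hDp : ∀ p, D p = L m (L n p) - L n (L m p) - ((m : ℂ) - (n : ℂ)) • L (m + n) p :=
    fun p => rfl
  have hc : ∀ k p, D (hOp k p) = hOp k (D p) := by
    intro k p
    have e : ∀ a b q, L a (hOp b q) = hOp b (L a q) + -(b : ℂ) • hOp (a + b) q :=
      fun a b q => by rw [← L_hOp_comm L hL a b q]; abel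
    -- Both double commutators end in `h(m + n + k)`.
    simp only [hDp, e, map_add, map_sub, map_smul, show m + (n + k) = m + n + k by ring,
      show n + (m + k) = m + n + k by ring]
    push_cast
    module
  have hv : constantCoeff (L (m + n) 1) = 0 := by
    rcases le_total 0 (m + n) with h | h
    · rw [L_one L hL h, map_zero]
    · exact vac_L L hL h 1
  have hs := scalar_of_comm D hc
  rw [hDp, map_sub, map_sub, vac_smul, hv, vac_L_L_one L hL, vac_L_L_one L hL] at hs
  rw [← sub_eq_iff_eq_add', ← hD, hs]
  congr 1
  by_cases hmn : m + n = 0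
  · obtain rfl : n = -m := by omega
    rcases lt_trichotomy m 0 with h | h | h
    · rw [if_neg (by omega), if_pos (by omega), if_pos hmn]
      push_cast
      ring
    · subst h
      simp
    · rw [if_pos (by omega), if_neg (by omega), if_pos hmn]
      ring
  · rw [if_neg (by omega), if_neg (by omega), if_neg hmn]
    ring
end
end

section
/- S is the direct sum of the eigenspaces of L(0), the eigenvalues of L(0) are exactly the nonnegative integers, and for each n ∈ ℕ the eigenspace S_n = {p ∈ S : L(0)(p) = n·p} is finite-dimensional with dim_ℂ S_n equal to the number of partitions of n. (Equivalently, the graded dimension of S is ∑_{n≥0} (dim S_n)qⁿ = ∏_{n>0}(1−qⁿ)⁻¹.) -/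
/-!
In the normally ordered product `:h(j)h(-j):` with `j = ±k`, `k > 0`, the derivative acts first, so
it equals `k·aₖ·∂/∂aₖ`, which multiplies the monomial `∏ aₖ ^ dₖ` by `k·dₖ`. Summing over `j` and
halving shows that `L(0)` is diagonal on monomials, with eigenvalue the degree `wt d = ∑ k·dₖ`
(`L0_monomial`). Eigenspaces are therefore spanned by the monomials of a fixed degree
(`mem_eigenspace_L0`, `eigenspace_L0_eq`), and together they span `S`. Reading the exponent `dₖ` as
the multiplicity of the part `k` identifies the monomials of degree `n` with the partitions of `n`
(`toPartition_bijective`), which gives the dimension; it is positive since every `n` has a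
partition, so every `n` is an eigenvalue.
-/

noncomputable section

/-- The degree `∑ₖ k·dₖ` of the monomial `∏ₖ aₖ ^ dₖ`, where `aₖ` has degree `k`. -/
def wt (d : ℕ+ →₀ ℕ) : ℕ := Finsupp.weight (fun k : ℕ+ => (k : ℕ)) d

lemma nord_zero_mode (p : SS) : nord 0 (-0) p = 0 := by
  simp [nord, hOp]

lemma hOp_pos_apply (k : ℕ+) (p : SS) :
    hOp (k : ℤ) p = (k : ℂ) • MvPolynomial.pderiv k p := by
  have hk : (0 : ℤ) < (k : ℤ) := by exact_mod_cast k.pos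
  have h : hOp (k : ℤ) = ((k : ℤ) : ℂ) •
      (MvPolynomial.pderiv (R := ℂ) (⟨(k : ℤ).toNat, by omega⟩ : ℕ+)).toLinearMap := dif_pos hk
  rw [h]
  rfl

lemma hOp_neg_apply (k : ℕ+) (p : SS) :
    hOp (-(k : ℤ)) p = MvPolynomial.X k * p := by
  have hk : (0 : ℤ) < (k : ℤ) := by exact_mod_cast k.pos
  have h1 : ¬ (0 : ℤ) < -(k : ℤ) := by omega
  have h2 : -(k : ℤ) < 0 := by omega
  have e : (⟨(-(-(k : ℤ))).toNat, by omega⟩ : ℕ+) = k := PNat.eq (by simp)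
  have h : hOp (-(k : ℤ)) = LinearMap.mulLeft ℂ (MvPolynomial.X k : SS) :=
    ((dif_neg h1).trans (dif_pos h2)).trans
      (congrArg (fun l : ℕ+ => LinearMap.mulLeft ℂ (MvPolynomial.X l : SS)) e)
  rw [h, LinearMap.mulLeft_apply]

lemma hOp_neg_mul_hOp (k : ℕ+) (d : ℕ+ →₀ ℕ) (c : ℂ) :
    (hOp (-(k : ℤ)) * hOp (k : ℤ)) (MvPolynomial.monomial d c)
      = ((d k * (k : ℕ) : ℕ) : ℂ) • MvPolynomial.monomial d c := by
  rw [Module.End.mul_apply, hOp_pos_apply, hOp_neg_apply, mul_smul_comm,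
    MvPolynomial.X_mul_pderiv_monomial, ← Nat.cast_smul_eq_nsmul ℂ, smul_smul]
  push_cast
  rw [mul_comm]

/-- Both modes `j = ±k` contribute the same number operator: normal ordering always puts the
derivative first. -/
lemma nord_pos (k : ℕ+) (d : ℕ+ →₀ ℕ) (c : ℂ) :
    nord (k : ℤ) (-(k : ℤ)) (MvPolynomial.monomial d c)
      = ((d k * (k : ℕ) : ℕ) : ℂ) • MvPolynomial.monomial d c := by
  have hk : (0 : ℤ) < (k : ℤ) := by exact_mod_cast k.pos
  rw [nord, if_neg (by omega), hOp_neg_mul_hOp]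

lemma nord_neg (k : ℕ+) (d : ℕ+ →₀ ℕ) (c : ℂ) :
    nord (-(k : ℤ)) (-(-(k : ℤ))) (MvPolynomial.monomial d c)
      = ((d k * (k : ℕ) : ℕ) : ℂ) • MvPolynomial.monomial d c := by
  have hk : (0 : ℤ) < (k : ℤ) := by exact_mod_cast k.pos
  rw [nord, if_pos (by omega), neg_neg, hOp_neg_mul_hOp]

lemma int_cases (j : ℤ) : j = 0 ∨ (∃ k : ℕ+, j = k) ∨ ∃ k : ℕ+, j = -(k : ℤ) := by
  rcases lt_trichotomy j 0 with h | h | h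
  · exact Or.inr (Or.inr ⟨⟨(-j).toNat, by omega⟩, by simp; omega⟩)
  · exact Or.inl h
  · exact Or.inr (Or.inl ⟨⟨j.toNat, by omega⟩, by simp; omega⟩)

/-- On a monomial only the modes `±k` with `aₖ` occurring in it act nontrivially, and each pair
`±k` contributes `2·k·dₖ`. -/
lemma finsum_nord_monomial (d : ℕ+ →₀ ℕ) (c : ℂ) :
    ∑ᶠ j : ℤ, nord j (-j) (MvPolynomial.monomial d c)
      = (2 * (wt d : ℂ)) • MvPolynomial.monomial d c := by
  classical
  let s : Finset ℤ := d.support.image (fun k : ℕ+ => (k : ℤ))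
  let t : Finset ℤ := d.support.image (fun k : ℕ+ => -(k : ℤ))
  have hsub : Function.support (fun j : ℤ => nord j (-j) (MvPolynomial.monomial d c))
      ⊆ ((s ∪ t : Finset ℤ) : Set ℤ) := by
    intro j hj
    rw [Function.mem_support] at hj
    rcases int_cases j with rfl | ⟨k, rfl⟩ | ⟨k, rfl⟩
    · exact absurd (nord_zero_mode _) hj
    · have : d k ≠ 0 := fun h => hj (by rw [nord_pos, h]; simp)
      exact Finset.mem_coe.2 (Finset.mem_union_left _
        (Finset.mem_image_of_mem _ (Finsupp.mem_support_iff.2 this)))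
    · have : d k ≠ 0 := fun h => hj (by rw [nord_neg, h]; simp)
      exact Finset.mem_coe.2 (Finset.mem_union_right _
        (Finset.mem_image_of_mem (fun k : ℕ+ => -(k : ℤ)) (Finsupp.mem_support_iff.2 this)))
  have hdisj : Disjoint s t := by
    rw [Finset.disjoint_left]
    intro j hs ht
    obtain ⟨k, -, rfl⟩ := Finset.mem_image.1 hs
    obtain ⟨l, -, hl⟩ := Finset.mem_image.1 ht
    have hk : (0 : ℤ) < (k : ℤ) := by exact_mod_cast k.pos
    have hl' : (0 : ℤ) < (l : ℤ) := by exact_mod_cast l.pos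
    omega
  have hinj : ∀ k l : ℕ+, (k : ℤ) = (l : ℤ) → k = l := fun k l h =>
    PNat.eq (by exact_mod_cast h)
  rw [finsum_eq_sum_of_support_subset _ hsub, Finset.sum_union hdisj,
    Finset.sum_image (fun k _ l _ h => hinj k l h),
    Finset.sum_image (fun k _ l _ h => hinj k l (neg_injective h))]
  simp only [nord_pos, nord_neg]
  rw [← Finset.sum_smul, ← add_smul, ← two_mul, ← Nat.cast_sum]
  simp [wt, Finsupp.weight_apply, Finsupp.sum]

lemma L0_monomial {L0 : Module.End ℂ SS}
    (hL0 : ∀ p : SS, L0 p = (1 / 2 : ℂ) • ∑ᶠ j : ℤ, nord j (-j) p)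
    (d : ℕ+ →₀ ℕ) (c : ℂ) :
    L0 (MvPolynomial.monomial d c) = (wt d : ℂ) • MvPolynomial.monomial d c := by
  rw [hL0, finsum_nord_monomial, smul_smul]
  congr 1
  ring

lemma coeff_L0 {L0 : Module.End ℂ SS}
    (hL0 : ∀ p : SS, L0 p = (1 / 2 : ℂ) • ∑ᶠ j : ℤ, nord j (-j) p)
    (p : SS) (d : ℕ+ →₀ ℕ) :
    MvPolynomial.coeff d (L0 p) = (wt d : ℂ) * MvPolynomial.coeff d p := by
  classical
  induction p using MvPolynomial.induction_on' with
  | monomial e c =>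
    rw [L0_monomial hL0, MvPolynomial.coeff_smul, MvPolynomial.coeff_monomial, smul_eq_mul]
    split_ifs with h
    · rw [h]
    · simp
  | add p q hp hq => rw [map_add, MvPolynomial.coeff_add, hp, hq, MvPolynomial.coeff_add, mul_add]

lemma mem_eigenspace_L0 {L0 : Module.End ℂ SS}
    (hL0 : ∀ p : SS, L0 p = (1 / 2 : ℂ) • ∑ᶠ j : ℤ, nord j (-j) p)
    (μ : ℂ) (p : SS) :
    p ∈ Module.End.eigenspace L0 μ ↔ ∀ d, MvPolynomial.coeff d p ≠ 0 → (wt d : ℂ) = μ := by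
  rw [Module.End.mem_eigenspace_iff, MvPolynomial.ext_iff]
  refine forall_congr' fun d => ?_
  rw [coeff_L0 hL0, MvPolynomial.coeff_smul, smul_eq_mul, mul_eq_mul_right_iff]
  tauto

lemma eigenspace_L0_eq {L0 : Module.End ℂ SS}
    (hL0 : ∀ p : SS, L0 p = (1 / 2 : ℂ) • ∑ᶠ j : ℤ, nord j (-j) p)
    (n : ℕ) :
    Module.End.eigenspace L0 (n : ℂ) = MvPolynomial.restrictSupport ℂ {d | wt d = n} := by
  have : MvPolynomial.restrictSupport ℂ {d | wt d = n}
      = MvPolynomial.weightedHomogeneousSubmodule ℂ (fun k : ℕ+ => (k : ℕ)) n :=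
    (MvPolynomial.weightedHomogeneousSubmodule_eq_finsupp_supported ℂ _ n).symm
  ext p
  rw [this, mem_eigenspace_L0 hL0, MvPolynomial.mem_weightedHomogeneousSubmodule]
  simp only [Nat.cast_inj]
  rfl

lemma sum_toMultiset (d : ℕ+ →₀ ℕ) :
    ((Finsupp.toMultiset d).map (fun k : ℕ+ => (k : ℕ))).sum = wt d := by
  simp [Finsupp.toMultiset_map, wt, Finsupp.weight_apply,
    Finsupp.sum_mapDomain_index, add_mul]

/-- The partition of `n` in which the part `k` occurs `dₖ` times. -/
def toPartition (n : ℕ) (d : {d : ℕ+ →₀ ℕ | wt d = n}) : Nat.Partition n where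
  parts := (Finsupp.toMultiset d.1).map (fun k : ℕ+ => (k : ℕ))
  parts_pos := by
    intro i hi
    obtain ⟨k, -, rfl⟩ := Multiset.mem_map.1 hi
    exact k.pos
  parts_sum := (sum_toMultiset d.1).trans d.2

lemma toPartition_bijective (n : ℕ) : Function.Bijective (toPartition n) := by
  constructor
  · intro d e h
    have h' := congrArg Nat.Partition.parts h
    exact Subtype.ext (Multiset.toFinsupp.symm.injective
      (Multiset.map_injective PNat.coe_injective h'))
  · rintro ⟨m, hpos, hsum⟩
    lift m to Multiset ℕ+ using fun i hi => hpos hi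
    have hm : Finsupp.toMultiset (Multiset.toFinsupp m) = m := Multiset.toFinsupp_toMultiset m
    refine ⟨⟨Multiset.toFinsupp m, ?_⟩, ?_⟩
    · rw [Set.mem_ofPred_eq, ← sum_toMultiset, hm]
      exact hsum
    · apply Nat.Partition.ext
      change Multiset.map _ (Finsupp.toMultiset (Multiset.toFinsupp m)) = _
      rw [hm]

/-- `S` is the direct sum of the eigenspaces of `L(0)`; the eigenvalues of `L(0)` are
exactly the nonnegative integers; and the eigenspace for `n` has dimension equal to the
number of partitions of `n` (so the graded dimension of `S` is `∏_{n>0}(1−qⁿ)⁻¹`). -/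
theorem grading_of_S (L0 : Module.End ℂ SS)
    (hL0 : ∀ p : SS, L0 p = (1 / 2 : ℂ) • ∑ᶠ j : ℤ, nord j (-j) p) :
    DirectSum.IsInternal (fun μ : ℂ => Module.End.eigenspace L0 μ) ∧
    (∀ μ : ℂ, Module.End.HasEigenvalue L0 μ ↔ ∃ n : ℕ, μ = n) ∧
    (∀ n : ℕ, Module.finrank ℂ (Module.End.eigenspace L0 (n : ℂ))
        = Fintype.card (Nat.Partition n)) := by
  have hfin : ∀ n : ℕ, Module.finrank ℂ (Module.End.eigenspace L0 (n : ℂ))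
      = Fintype.card (Nat.Partition n) := by
    intro n
    rw [eigenspace_L0_eq hL0, Module.finrank_eq_nat_card_basis
      (MvPolynomial.basisRestrictSupport ℂ {d | wt d = n}),
      Nat.card_eq_of_bijective _ (toPartition_bijective n), Nat.card_eq_fintype_card]
  refine ⟨?_, ?_, hfin⟩
  · refine DirectSum.isInternal_submodule_of_iSupIndep_of_iSup_eq_top
      (Module.End.eigenspaces_iSupIndep L0) (eq_top_iff.2 fun p _ => ?_)
    rw [p.as_sum]
    exact Submodule.sum_mem _ fun d _ => Submodule.mem_iSup_of_mem (wt d : ℂ)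
      (Module.End.mem_eigenspace_iff.2 (L0_monomial hL0 d _))
  · intro μ
    constructor
    · intro hμ
      obtain ⟨p, hp, hp0⟩ := hμ.exists_hasEigenvector
      obtain ⟨d, hd⟩ := MvPolynomial.ne_zero_iff.1 hp0
      exact ⟨wt d, ((mem_eigenspace_L0 hL0 μ p).1 hp d hd).symm⟩
    · rintro ⟨n, rfl⟩ h
      -- a zero eigenspace would have dimension `0`, but every `n` has a partition
      have h0 := hfin n
      rw [show Module.End.eigenspace L0 (n : ℂ) = ⊥ from h, finrank_bot] at h0
      exact Fintype.card_ne_zero h0.symm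
end
end

section
/- Let 𝒟⁺ be the ℂ-linear span in End_ℂ(ℂ[t,t⁻¹]) of the differential operators Dʳ∘M_{tⁿ}∘D∘Dʳ for r ∈ ℕ and n ∈ ℤ. Then 𝒟⁺ is a Lie subalgebra of End_ℂ(ℂ[t,t⁻¹]) under the commutator bracket, and 𝒟⁺ contains the operator M_{tⁿ}∘D for every n ∈ ℤ (i.e., 𝒟⁺ contains the Lie algebra of vector fields spanned by the tⁿD). -/
noncomputable section

/-!
On the monomial basis the generator `G r n = Dʳ M_{tⁿ} D Dʳ` acts by
`tᵏ ↦ k (k(k+n))ʳ tᵏ⁺ⁿ`. Hence an operator `tᵏ ↦ k f(k) tᵏ⁺ᴺ` lies in the span as soon as `f` is a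
polynomial in `X(X+N)` (`mem_dplus_of_apply_T`).

For `r = s + p`, `q = p + 2s + 1`, `N = n + m`, the commutator `[G s m, G r n]` acts by
`tᵏ ↦ k (ac)ˢ (aᵖ (a+n)^q - cᵖ (c-n)^q) tᵏ⁺ᴺ` with `a = k`, `c = k + N`. Since `p + q` is odd, the
last factor is `F(a) + F(-c)` for `F = Xᵖ (X+n)^q`. As `a + (-c) = -N` is constant, each power sum
`aʲ + (-c)ʲ` is a polynomial in `ac` by Newton's recurrence, hence so is `F(a) + F(-c)`
(`reflect_sum_mem`). The case `r < s` follows by antisymmetry.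
-/

namespace Dplus

open Polynomial

/-- The generator `Dʳ ∘ M_{tⁿ} ∘ D ∘ Dʳ`. -/
def gen (Dop : Module.End ℂ (LaurentPolynomial ℂ)) (r : ℕ) (n : ℤ) :
    Module.End ℂ (LaurentPolynomial ℂ) :=
  Dop ^ r * (LinearMap.mulLeft ℂ (LaurentPolynomial.T n) * Dop) * Dop ^ r

/-- The span `𝒟⁺` of all generators. -/
abbrev dplus (Dop : Module.End ℂ (LaurentPolynomial ℂ)) :
    Submodule ℂ (Module.End ℂ (LaurentPolynomial ℂ)) :=
  Submodule.span ℂ {g | ∃ r : ℕ, ∃ n : ℤ, g = gen Dop r n}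

lemma end_ext {g h : Module.End ℂ (LaurentPolynomial ℂ)}
    (H : ∀ k : ℤ, g (LaurentPolynomial.T k) = h (LaurentPolynomial.T k)) : g = h := by
  refine LinearMap.ext fun x => ?_
  induction x using LaurentPolynomial.induction_on' with
  | add p q hp hq => rw [map_add, map_add, hp, hq]
  | C_mul_T n a => rw [← LaurentPolynomial.smul_eq_C_mul, map_smul, map_smul, H]

section

variable {Dop : Module.End ℂ (LaurentPolynomial ℂ)}

lemma pow_apply_T
    (hD : ∀ k : ℤ, Dop (LaurentPolynomial.T k) = (k : ℂ) • LaurentPolynomial.T k)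
    (r : ℕ) (k : ℤ) :
    (Dop ^ r) (LaurentPolynomial.T k) = (k : ℂ) ^ r • LaurentPolynomial.T k := by
  induction r with
  | zero => simp
  | succ r ih => rw [pow_succ', Module.End.mul_apply, ih, map_smul, hD, smul_smul, pow_succ]

lemma gen_apply_T
    (hD : ∀ k : ℤ, Dop (LaurentPolynomial.T k) = (k : ℂ) • LaurentPolynomial.T k)
    (r : ℕ) (n k : ℤ) :
    gen Dop r n (LaurentPolynomial.T k) =
      ((k : ℂ) * ((k : ℂ) * ((k : ℂ) + n)) ^ r) • LaurentPolynomial.T (k + n) := by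
  simp only [gen, Module.End.mul_apply, pow_apply_T hD, map_smul, hD, LinearMap.mulLeft_apply,
    ← LaurentPolynomial.T_add, smul_smul]
  rw [add_comm n k]
  congr 1
  push_cast
  rw [mul_pow]
  ring

/-- An operator `tᵏ ↦ k f(k) tᵏ⁺ᴺ` with `f` a polynomial in `X(X+N)` lies in `𝒟⁺`. -/
lemma mem_dplus_of_apply_T
    (hD : ∀ k : ℤ, Dop (LaurentPolynomial.T k) = (k : ℂ) • LaurentPolynomial.T k)
    {N : ℤ} {f : ℂ[X]} (hf : f ∈ Algebra.adjoin ℂ {(X * (X + C (N : ℂ)) : ℂ[X])})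
    {g : Module.End ℂ (LaurentPolynomial ℂ)}
    (hg : ∀ k : ℤ, g (LaurentPolynomial.T k) =
      ((k : ℂ) * f.eval (k : ℂ)) • LaurentPolynomial.T (k + N)) :
    g ∈ dplus Dop := by
  rw [Algebra.adjoin_singleton_eq_range_aeval] at hf
  obtain ⟨Q, hQ⟩ := hf
  replace hQ : f = aeval (X * (X + C (N : ℂ))) Q := hQ.symm
  subst hQ
  have key : g = ∑ i ∈ Finset.range (Q.natDegree + 1), Q.coeff i • gen Dop i N := by
    refine end_ext fun k => ?_
    rw [hg, LinearMap.sum_apply]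
    simp only [LinearMap.smul_apply, gen_apply_T hD, smul_smul]
    rw [← Finset.sum_smul]
    congr 1
    rw [aeval_eq_sum_range, eval_finsetSum, Finset.mul_sum]
    refine Finset.sum_congr rfl fun i _ => ?_
    simp only [eval_smul, eval_pow, eval_mul, eval_X, eval_add, eval_C, smul_eq_mul]
    ring
  rw [key]
  exact Submodule.sum_mem _ fun i _ =>
    Submodule.smul_mem _ _ (Submodule.subset_span ⟨i, N, rfl⟩)

end

/-- Power sums of `X` and `-(X+N)`, whose sum is the constant `-N`, are polynomials in
`X(X+N)`. -/
lemma power_sum_mem (N : ℂ) (j : ℕ) :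
    (X ^ j + (-(X + C N)) ^ j : ℂ[X]) ∈ Algebra.adjoin ℂ {(X * (X + C N) : ℂ[X])} := by
  induction j using Nat.twoStepInduction with
  | zero => simpa using add_mem (one_mem _) (one_mem _)
  | one =>
    have h : (X ^ 1 + (-(X + C N)) ^ 1 : ℂ[X]) = algebraMap ℂ ℂ[X] (-N) := by
      rw [← C_eq_algebraMap, C_neg]; ring
    rw [h]
    exact Subalgebra.algebraMap_mem _ _
  | more j h0 h1 =>
    have h : (X ^ (j + 2) + (-(X + C N)) ^ (j + 2) : ℂ[X]) =
        algebraMap ℂ ℂ[X] (-N) * (X ^ (j + 1) + (-(X + C N)) ^ (j + 1)) +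
          X * (X + C N) * (X ^ j + (-(X + C N)) ^ j) := by
      rw [← C_eq_algebraMap, C_neg]; ring
    rw [h]
    exact add_mem (mul_mem (Subalgebra.algebraMap_mem _ _) h1)
      (mul_mem (Algebra.subset_adjoin rfl) h0)

lemma reflect_sum_mem (N : ℂ) (F : ℂ[X]) :
    F + F.comp (-(X + C N)) ∈ Algebra.adjoin ℂ {(X * (X + C N) : ℂ[X])} := by
  induction F using Polynomial.induction_on' with
  | add p q hp hq =>
    rw [add_comp, add_add_add_comm]
    exact add_mem hp hq
  | monomial j a =>
    rw [monomial_comp, ← C_mul_X_pow_eq_monomial, ← mul_add, C_eq_algebraMap]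
    exact mul_mem (Subalgebra.algebraMap_mem _ _) (power_sum_mem N j)

/-- The symbol of the commutator `[G s m, G (s+p) n]` at `a`, with `u = n` and `v = m`, is
`a (ac)ˢ (F(a) + F(-c))`. -/
lemma symbol_identity (a u v : ℂ) (s p : ℕ) :
    a * (a * (a + u)) ^ (s + p) * ((a + u) * ((a + u) * (a + u + v)) ^ s) -
      a * (a * (a + v)) ^ s * ((a + v) * ((a + v) * (a + v + u)) ^ (s + p)) =
    a * ((a * (a + (u + v))) ^ s * (a ^ p * (a + u) ^ (p + 2 * s + 1) +
      (-(a + (u + v))) ^ p * (-(a + (u + v)) + u) ^ (p + 2 * s + 1))) := by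
  have e₁ : a + u + v = a + (u + v) := by ring
  have e₂ : a + v + u = a + (u + v) := by ring
  have e₃ : -(a + (u + v)) + u = -(a + v) := by ring
  rw [e₁, e₂, e₃]
  generalize a + (u + v) = c
  generalize a + u = b
  generalize a + v = d
  -- The sign `(-1) ^ (p + q)` with `p + q` odd turns the sum `F(a) + F(-c)` into a difference.
  have hsign : (-c) ^ p * (-d) ^ (p + 2 * s + 1) = -(c ^ p * d ^ (p + 2 * s + 1)) := by
    have h : (-1 : ℂ) ^ p * (-1) ^ (p + 2 * s + 1) = -1 := by
      rw [← pow_add]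
      exact Odd.neg_one_pow ⟨p + s, by ring⟩
    rw [neg_pow, neg_pow d]
    linear_combination (c ^ p * d ^ (p + 2 * s + 1)) * h
  rw [hsign]
  ring

lemma commutator_mem_of_le {Dop : Module.End ℂ (LaurentPolynomial ℂ)}
    (hD : ∀ k : ℤ, Dop (LaurentPolynomial.T k) = (k : ℂ) • LaurentPolynomial.T k)
    {r s : ℕ} (hrs : s ≤ r) (n m : ℤ) :
    gen Dop s m * gen Dop r n - gen Dop r n * gen Dop s m ∈ dplus Dop := by
  obtain ⟨p, rfl⟩ := Nat.exists_eq_add_of_le hrs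
  have hmem := mul_mem
    (pow_mem (Algebra.subset_adjoin (R := ℂ)
      (Set.mem_singleton (X * (X + C ((n + m : ℤ) : ℂ)) : ℂ[X]))) s)
    (reflect_sum_mem ((n + m : ℤ) : ℂ) (X ^ p * (X + C (n : ℂ)) ^ (p + 2 * s + 1)))
  refine mem_dplus_of_apply_T hD hmem fun k => ?_
  rw [LinearMap.sub_apply, Module.End.mul_apply, Module.End.mul_apply, gen_apply_T hD,
    gen_apply_T hD, map_smul, map_smul, gen_apply_T hD, gen_apply_T hD, smul_smul, smul_smul,
    add_right_comm k m n, add_assoc k n m, ← sub_smul]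
  congr 1
  simp only [eval_mul, eval_pow, eval_add, eval_X, eval_C, eval_comp, eval_neg, Int.cast_add]
  exact symbol_identity _ _ _ _ _

lemma commutator_mem {Dop : Module.End ℂ (LaurentPolynomial ℂ)}
    (hD : ∀ k : ℤ, Dop (LaurentPolynomial.T k) = (k : ℂ) • LaurentPolynomial.T k)
    (r s : ℕ) (n m : ℤ) :
    gen Dop r n * gen Dop s m - gen Dop s m * gen Dop r n ∈ dplus Dop := by
  rcases le_total r s with h | h
  · exact commutator_mem_of_le hD h m n
  · rw [← neg_sub]
    exact neg_mem (commutator_mem_of_le hD h n m)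

end Dplus

/-- The span `𝒟⁺` of the operators `Dʳ∘M_{tⁿ}∘D∘Dʳ` (`r ∈ ℕ`, `n ∈ ℤ`) on `ℂ[t,t⁻¹]`
is a Lie subalgebra of `End_ℂ(ℂ[t,t⁻¹])` under the commutator bracket, and it contains
`M_{tⁿ}∘D` for every `n ∈ ℤ`. -/
theorem Dplus_is_lie_subalgebra_containing_vector_fields
    (Dop : Module.End ℂ (LaurentPolynomial ℂ))
    (hD : ∀ k : ℤ, Dop (LaurentPolynomial.T k) = (k : ℂ) • LaurentPolynomial.T k) :
    (∀ x ∈ Submodule.span ℂ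
        {g : Module.End ℂ (LaurentPolynomial ℂ) | ∃ r : ℕ, ∃ n : ℤ,
          g = Dop ^ r * (LinearMap.mulLeft ℂ (LaurentPolynomial.T n) * Dop) * Dop ^ r},
      ∀ y ∈ Submodule.span ℂ
        {g : Module.End ℂ (LaurentPolynomial ℂ) | ∃ r : ℕ, ∃ n : ℤ,
          g = Dop ^ r * (LinearMap.mulLeft ℂ (LaurentPolynomial.T n) * Dop) * Dop ^ r},
      x * y - y * x ∈ Submodule.span ℂ
        {g : Module.End ℂ (LaurentPolynomial ℂ) | ∃ r : ℕ, ∃ n : ℤ,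
          g = Dop ^ r * (LinearMap.mulLeft ℂ (LaurentPolynomial.T n) * Dop) * Dop ^ r}) ∧
    (∀ n : ℤ, LinearMap.mulLeft ℂ (LaurentPolynomial.T n) * Dop ∈ Submodule.span ℂ
        {g : Module.End ℂ (LaurentPolynomial ℂ) | ∃ r : ℕ, ∃ n : ℤ,
          g = Dop ^ r * (LinearMap.mulLeft ℂ (LaurentPolynomial.T n) * Dop) * Dop ^ r}) := by
  refine ⟨fun x hx y hy => ?_, fun n => Submodule.subset_span ⟨0, n, by simp⟩⟩
  induction hx, hy using Submodule.span_induction₂ with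
  | mem_mem x y hx hy =>
    obtain ⟨r, n, rfl⟩ := hx
    obtain ⟨s, m, rfl⟩ := hy
    exact Dplus.commutator_mem hD r s n m
  | zero_left y hy => simp
  | zero_right x hx => simp
  | add_left x y z _ _ _ h₁ h₂ =>
    rw [add_mul, mul_add, add_sub_add_comm]
    exact add_mem h₁ h₂
  | add_right x y z _ _ _ h₁ h₂ =>
    rw [add_mul, mul_add, add_sub_add_comm]
    exact add_mem h₁ h₂
  | smul_left c x y _ _ h =>
    rw [smul_mul_assoc, mul_smul_comm, ← smul_sub]
    exact Submodule.smul_mem _ _ h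
  | smul_right c x y _ _ h =>
    rw [smul_mul_assoc, mul_smul_comm, ← smul_sub]
    exact Submodule.smul_mem _ _ h
end
end
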